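/- Let g ∈ C¹(ℝ) with G(y) = ∫₀^y g(t) dt, and suppose lim_{y→+∞} y·g(y)/G(y) = α and lim_{y→−∞} y·g(y)/G(y) = α, where G(y) > 0 for |y| large. Then for every β > α there exists C > 0 such that |g(y)| ≤ C(|y|^{β−1} + 1) for all y ∈ ℝ. -/

import Mathlib

open Filter Topology

theorem growth_aux (g G : ℝ → ℝ) (hd : ∀ y, HasDerivAt G (g y) y) (α β R : ℝ)
    (hpos : ∀ y : ℝ, R ≤ y → 0 < G y)
    (htop : Tendsto (fun y : ℝ => y * g y / G y) atTop (𝓝 α)) (hab : α < β) :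
    ∃ R₀ > 0, ∃ C > 0, ∀ y : ℝ, R₀ ≤ y → |g y| ≤ C * y ^ (β - 1) := by
  have h1 := htop.eventually_lt_const hab
  have h2 := htop.eventually_const_lt (show α - 1 < α by linarith)
  have h3 := htop.eventually_lt_const (show α < α + 1 by linarith)
  obtain ⟨N, hN⟩ := eventually_atTop.1 (h1.and (h2.and h3))
  obtain ⟨R₀, hR1, hRN, hRR⟩ : ∃ R₀ : ℝ, 1 ≤ R₀ ∧ N ≤ R₀ ∧ R ≤ R₀ :=
    ⟨max 1 (max N R), le_max_left _ _, (le_max_left _ _).trans (le_max_right _ _),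
      (le_max_right _ _).trans (le_max_right _ _)⟩
  have hder : ∀ y : ℝ, 0 < y → HasDerivAt (fun y => G y * y ^ (-β))
      (g y * y ^ (-β) + G y * (-β * y ^ (-β - 1))) y := fun y hy =>
    (hd y).mul (Real.hasDerivAt_rpow_const (Or.inl hy.ne'))
  have hanti : AntitoneOn (fun y => G y * y ^ (-β)) (Set.Ici R₀) := by
    apply antitoneOn_of_deriv_nonpos (convex_Ici R₀)
    · intro y hy
      have hy' : R₀ ≤ y := hy
      exact (hder y (by linarith)).continuousAt.continuousWithinAt
    · intro y hy
      rw [interior_Ici] at hy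
      have hy' : R₀ < y := hy
      exact (hder y (by linarith)).differentiableAt.differentiableWithinAt
    · intro y hy
      rw [interior_Ici] at hy
      have hy' : R₀ < y := hy
      have hy0 : 0 < y := by linarith
      rw [(hder y hy0).deriv]
      have hGp := hpos y (by linarith)
      have hlt := (div_lt_iff₀ hGp).1 (hN y (by linarith)).1
      have e : y ^ (-β) = y ^ (-β - 1) * y := by
        rw [Real.rpow_sub_one hy0.ne']; field_simp
      rw [e]
      have hp : 0 < y ^ (-β - 1) := Real.rpow_pos_of_pos hy0 _
      nlinarith
  have hR0 : 0 < R₀ := by linarith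
  have hK : 0 < G R₀ * R₀ ^ (-β) := mul_pos (hpos _ hRR) (Real.rpow_pos_of_pos hR0 _)
  refine ⟨R₀, hR0, (|α| + 1) * (G R₀ * R₀ ^ (-β)), by positivity, fun y hy => ?_⟩
  have hy0 : 0 < y := by linarith
  have hGp := hpos y (by linarith)
  have hle : G y * y ^ (-β) ≤ G R₀ * R₀ ^ (-β) :=
    hanti (Set.mem_Ici.2 le_rfl) (Set.mem_Ici.2 hy) hy
  have hb : 0 < y ^ β := Real.rpow_pos_of_pos hy0 _
  rw [Real.rpow_neg hy0.le, ← div_eq_mul_inv, div_le_iff₀ hb] at hle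
  obtain ⟨-, ha, hc⟩ := hN y (by linarith)
  have habs : |y * g y / G y| ≤ |α| + 1 := by
    rw [abs_le]
    constructor
    · linarith [neg_abs_le α]
    · linarith [le_abs_self α]
  rw [abs_div, abs_mul, abs_of_pos hGp, abs_of_pos hy0, div_le_iff₀ hGp] at habs
  rw [Real.rpow_sub_one hy0.ne', ← mul_div_assoc, le_div_iff₀ hy0]
  have hA : 0 ≤ |α| + 1 := by positivity
  calc |g y| * y = y * |g y| := mul_comm _ _
    _ ≤ (|α| + 1) * G y := habs
    _ ≤ (|α| + 1) * (G R₀ * R₀ ^ (-β) * y ^ β) := mul_le_mul_of_nonneg_left hle hA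
    _ = _ := by ring

/-- Explicit growth estimate (growth-explicit): if `g ∈ C¹`, `G(y) = ∫₀^y g`,
`G > 0` for large `|y|`, and `y·g(y)/G(y) → α` as `y → ±∞`, then for every `β > α`
there is `C > 0` with `|g(y)| ≤ C(|y|^{β−1} + 1)` for all `y`. -/
theorem growth_explicit (g : ℝ → ℝ) (hg : ContDiff ℝ 1 g) (G : ℝ → ℝ)
    (hG : ∀ y : ℝ, G y = ∫ t in (0 : ℝ)..y, g t)
    (α : ℝ)
    (hpos : ∃ R > (0 : ℝ), ∀ y : ℝ, R ≤ |y| → 0 < G y)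
    (htop : Tendsto (fun y : ℝ => y * g y / G y) atTop (𝓝 α))
    (hbot : Tendsto (fun y : ℝ => y * g y / G y) atBot (𝓝 α)) :
    ∀ β : ℝ, α < β → ∃ C > 0, ∀ y : ℝ, |g y| ≤ C * (|y| ^ (β - 1) + 1) := by
  intro β hab
  obtain ⟨R, -, hR⟩ := hpos
  have hc : Continuous g := hg.continuous
  have hd : ∀ y, HasDerivAt G (g y) y := by
    intro y
    rw [funext hG]
    exact (hc.integral_hasStrictDerivAt 0 y).hasDerivAt
  obtain ⟨R₁, hR1, C₁, hC1, h1⟩ := growth_aux g G hd α β R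
    (fun y hy => hR y (hy.trans (le_abs_self y))) htop hab
  obtain ⟨R₂, hR2, C₂, hC2, h2⟩ := growth_aux (fun y => -g (-y)) (fun y => G (-y))
    (fun y => by
      have h := (hd (-y)).comp y (hasDerivAt_neg y)
      simpa [Function.comp_def] using h) α β R
    (fun y hy => hR _ (by rw [abs_neg]; exact hy.trans (le_abs_self y)))
    (by
      have h := hbot.comp tendsto_neg_atTop_atBot
      simpa [Function.comp_def] using h) hab
  obtain ⟨M, hM⟩ := (isCompact_Icc (a := -R₂) (b := R₁)).exists_bound_of_continuousOn
    hc.continuousOn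
  refine ⟨C₁ + C₂ + |M|, by positivity, fun y => ?_⟩
  have hp : 0 ≤ |y| ^ (β - 1) := Real.rpow_nonneg (abs_nonneg y) _
  have hM0 := abs_nonneg M
  rcases le_total R₁ y with hy | hy
  · have h := h1 y hy
    rw [abs_of_nonneg (by linarith : 0 ≤ y)] at hp ⊢
    nlinarith
  rcases le_total y (-R₂) with hy' | hy'
  · have h := h2 (-y) (by linarith)
    simp only [neg_neg, abs_neg] at h
    rw [abs_of_nonpos (by linarith : y ≤ 0)] at hp ⊢
    nlinarith
  · have h := hM y ⟨hy', hy⟩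
    rw [Real.norm_eq_abs] at h
    have := le_abs_self M
    nlinarith
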